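/- arXiv:1910.11663 — 2 statements merged into one kernel-verified Lean document; each statement's English description precedes it below -/
import Mathlib

section
/- Let L/K be a finite extension of number fields and let q be a nonzero prime ideal of O_K. Then the exponent of q in the factorization of the relative discriminant ideal d_{L/K} (that is, the q-adic valuation ν_q(d_{L/K})) is at most [L:K]·[L:Q]. -/
open NumberField

/-- local membership of `a` in `q ^ k` can be tested at one prime above `q` -/
lemma aux_mem_pow {A B : Type*} [CommRing A] [CommRing B] [IsDedekindDomain A] [IsDedekindDomain B]
    [Algebra A B] [FaithfulSMul A B] (q : Ideal A) (hq0 : q ≠ ⊥) [hq : q.IsPrime] (Q : Ideal B) [Q.IsPrime]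
    (hQ : Q.comap (algebraMap A B) = q) (k : ℕ) (a : A) (s : B) (hs : s ∉ Q)
    (h : s * algebraMap A B a ∈ (q ^ k).map (algebraMap A B)) : a ∈ q ^ k := by
  by_contra hak
  have ha0 : a ≠ 0 := by rintro rfl; exact hak (zero_mem _)
  have hqp : Prime q := Ideal.prime_of_isPrime hq0 hq
  have hfin : FiniteMultiplicity q (Ideal.span {a}) :=
    FiniteMultiplicity.of_prime_left hqp (by simpa using ha0)
  obtain ⟨J, hJ, hqJ⟩ := hfin.exists_eq_pow_mul_and_not_dvd
  set j := multiplicity q (Ideal.span {a}) with hj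
  have hjk : j < k := by
    by_contra hc
    push Not at hc
    apply hak
    rw [← Ideal.dvd_span_singleton]
    exact (pow_dvd_pow q hc).trans ⟨J, hJ⟩
  obtain ⟨d, rfl⟩ := Nat.exists_eq_add_of_lt hjk
  rw [← Ideal.dvd_span_singleton, ← Ideal.span_singleton_mul_span_singleton, ← Set.image_singleton (f := algebraMap A B) (a := a),
    ← Ideal.map_span, hJ, Ideal.map_mul, Ideal.map_pow, Ideal.map_pow, add_assoc, pow_add,
    mul_left_comm] at h
  have hq0' : q.map (algebraMap A B) ≠ 0 := by
    rw [Ne, Ideal.zero_eq_bot, Ideal.map_eq_bot_iff_of_injective (FaithfulSMul.algebraMap_injective A B)]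
    exact hq0
  have h2 := (mul_dvd_mul_iff_left (pow_ne_zero _ hq0')).1 h
  have hQq : Q ∣ (q.map (algebraMap A B)) ^ (d + 1) := by
    refine dvd_pow ?_ (by simp)
    rw [Ideal.dvd_iff_le, Ideal.map_le_iff_le_comap, hQ]
  have h3 := hQq.trans h2
  have hQ0 : Q ≠ ⊥ := by
    rintro rfl
    apply hq0
    rw [← hQ, Ideal.comap_bot_of_injective _ (FaithfulSMul.algebraMap_injective A B)]
  have hQp : Prime Q := Ideal.prime_of_isPrime hQ0 inferInstance
  rcases hQp.dvd_or_dvd h3 with h4 | h4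
  · exact hs (Ideal.dvd_span_singleton.1 h4)
  · apply hqJ
    rw [Ideal.dvd_iff_le, Ideal.map_le_iff_le_comap, hQ] at h4
    rwa [Ideal.dvd_iff_le]

lemma aux_trace (K L : Type*) [Field K] [Field L] [NumberField K] [NumberField L] [Algebra K L] (x : L) :
    algebraMap K (IntermediateField.normalClosure K L (AlgebraicClosure L)) (Algebra.trace K L x) =
      ∑ τ : L →ₐ[K] (IntermediateField.normalClosure K L (AlgebraicClosure L)), τ x := by
  apply (algebraMap (IntermediateField.normalClosure K L (AlgebraicClosure L)) (AlgebraicClosure L)).injective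
  rw [← IsScalarTower.algebraMap_apply, trace_eq_sum_embeddings (AlgebraicClosure L), map_sum]
  exact (Fintype.sum_equiv (normalClosure.algHomEquiv K L (AlgebraicClosure L)) _ _ (fun τ => rfl)).symm

/-- the trace of an approximate idempotent is congruent to a positive integer `≤ n`. -/
lemma aux_idem (K L M : Type*) [Field K] [Field L] [Field M] [NumberField K] [NumberField L]
    [NumberField M] [Algebra K L] [Algebra K M] [Algebra L M] [IsScalarTower K L M]
    (htr : ∀ x : L, algebraMap K M (Algebra.trace K L x) = ∑ τ : L →ₐ[K] M, τ x)
    (q : Ideal (𝓞 K)) (hq0 : q ≠ ⊥) [hq : q.IsPrime] (P : Ideal (𝓞 L)) [hP : P.IsPrime]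
    (hPq : P.comap (algebraMap (𝓞 K) (𝓞 L)) = q) (k : ℕ) (x : 𝓞 L)
    (hx : x * (1 - x) ∈ (q ^ k).map (algebraMap (𝓞 K) (𝓞 L))) (hxP : 1 - x ∈ P) :
    ∃ r : ℕ, 0 < r ∧ r ≤ Module.finrank K L ∧
      Algebra.intTrace (𝓞 K) (𝓞 L) x - (r : 𝓞 K) ∈ q ^ k := by
  classical
  obtain ⟨Q, hQp, hQ⟩ := Ideal.exists_ideal_over_prime_of_isIntegral_of_isDomain (S := 𝓞 M) P
    (by rw [(RingHom.injective_iff_ker_eq_bot _).1 (FaithfulSMul.algebraMap_injective (𝓞 L) (𝓞 M))]; exact bot_le)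
  have hQq : Q.comap (algebraMap (𝓞 K) (𝓞 M)) = q := by
    rw [IsScalarTower.algebraMap_eq (𝓞 K) (𝓞 L) (𝓞 M), ← Ideal.comap_comap, hQ, hPq]
  let f : (L →ₐ[K] M) → (𝓞 L →+* 𝓞 M) := fun τ => RingOfIntegers.mapRingHom τ
  have hf : ∀ τ (y : 𝓞 L), ((f τ y : 𝓞 M) : M) = τ y := fun τ y => rfl
  have hfa : ∀ τ, (f τ).comp (algebraMap (𝓞 K) (𝓞 L)) = algebraMap (𝓞 K) (𝓞 M) := by
    intro τ
    ext y
    exact τ.commutes (y : K)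
  let S : Finset (L →ₐ[K] M) := Finset.univ.filter (fun τ => f τ x ∉ Q)
  refine ⟨S.card, ?_, ?_, ?_⟩
  · rw [Finset.card_pos]
    refine ⟨IsScalarTower.toAlgHom K L M, ?_⟩
    simp only [S, Finset.mem_filter, Finset.mem_univ, true_and]
    intro h
    have h1 : f (IsScalarTower.toAlgHom K L M) x = algebraMap (𝓞 L) (𝓞 M) x := rfl
    rw [h1, ← Ideal.mem_comap, hQ] at h
    exact hP.ne_top ((Ideal.eq_top_iff_one _).2 (by simpa using add_mem hxP h))
  · refine (Finset.card_le_univ _).trans ?_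
    rw [← Nat.card_eq_fintype_card]
    exact card_algHom_le_finrank K L M
  · have hsum : algebraMap (𝓞 K) (𝓞 M) (Algebra.intTrace (𝓞 K) (𝓞 L) x) = ∑ τ, f τ x := by
      apply RingOfIntegers.coe_injective
      rw [map_sum]
      simp only [hf]
      rw [← htr, ← Algebra.algebraMap_intTrace (A := 𝓞 K) (K := K) (L := L) (B := 𝓞 L)]
      rfl
    have hloc : ∃ s ∉ Q, s * (algebraMap (𝓞 K) (𝓞 M) (Algebra.intTrace (𝓞 K) (𝓞 L) x - (S.card : 𝓞 K)))
        ∈ (q ^ k).map (algebraMap (𝓞 K) (𝓞 M)) := by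
      set I := (q ^ k).map (algebraMap (𝓞 K) (𝓞 M)) with hI
      have key : algebraMap (𝓞 M) (Localization.AtPrime Q)
          (algebraMap (𝓞 K) (𝓞 M) (Algebra.intTrace (𝓞 K) (𝓞 L) x - (S.card : 𝓞 K))) ∈
          I.map (algebraMap (𝓞 M) (Localization.AtPrime Q)) := by
        have h1 : algebraMap (𝓞 K) (𝓞 M) (Algebra.intTrace (𝓞 K) (𝓞 L) x - (S.card : 𝓞 K)) =
            ∑ τ, (f τ x - if f τ x ∉ Q then 1 else 0) := by
          rw [map_sub, hsum, Finset.sum_sub_distrib, Finset.sum_boole]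
          simp [S]
        rw [h1, map_sum]
        refine Ideal.sum_mem _ fun τ _ => ?_
        have h2 : f τ x * (1 - f τ x) ∈ I := by
          have := Ideal.mem_map_of_mem (f τ) hx
          rw [Ideal.map_map, hfa] at this
          simpa using this
        rw [IsLocalization.algebraMap_mem_map_algebraMap_iff Q.primeCompl]
        by_cases h3 : f τ x ∉ Q
        · rw [if_pos h3]
          refine ⟨f τ x, h3, ?_⟩
          have := neg_mem h2
          convert this using 1
          ring
        · rw [if_neg h3]
          push Not at h3
          refine ⟨1 - f τ x, ?_, ?_⟩
          · intro h4
            exact hQp.ne_top ((Ideal.eq_top_iff_one _).2 (by simpa using add_mem (show 1 - f τ x ∈ Q from h4) h3))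
          · rw [sub_zero, mul_comm]; exact h2
      rw [IsLocalization.algebraMap_mem_map_algebraMap_iff Q.primeCompl] at key
      exact key
    obtain ⟨s, hs, h⟩ := hloc
    exact aux_mem_pow q hq0 Q hQq k _ s hs h

lemma aux_nat (K : Type*) [Field K] [NumberField K] (q : Ideal (𝓞 K)) [hq : q.IsPrime] (n r : ℕ)
    (hr : 0 < r) (hrn : r ≤ n) : (r : 𝓞 K) ∉ q ^ (n * Module.finrank ℚ K) := by
  intro h
  have h1 := Ideal.absNorm_dvd_norm_of_mem h
  rw [map_pow] at h1
  have h2 : Algebra.norm ℤ (r : 𝓞 K) = (r : ℤ) ^ Module.finrank ℚ K := by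
    have := Algebra.norm_algebraMap (S := 𝓞 K) (r : ℤ)
    simpa [RingOfIntegers.rank] using this
  rw [h2] at h1
  have h3 : (Ideal.absNorm q) ^ (n * Module.finrank ℚ K) ∣ r ^ Module.finrank ℚ K := by exact_mod_cast h1
  rw [pow_mul, Nat.pow_dvd_pow_iff (Module.finrank_pos).ne'] at h3
  have h4 := Nat.le_of_dvd hr h3
  have h5 : Ideal.absNorm q ≠ 1 := by
    rw [Ne, Ideal.absNorm_eq_one_iff]; exact hq.ne_top
  rcases Nat.lt_or_ge (Ideal.absNorm q) 2 with h6 | h6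
  · have h7 : Ideal.absNorm q = 0 := by omega
    rw [h7, zero_pow (by omega)] at h3
    simp at h3; omega
  · have := Nat.pow_le_pow_left h6 n
    have := Nat.lt_two_pow_self (n := n)
    omega

lemma aux_different (K L : Type*) [Field K] [Field L] [NumberField K] [NumberField L] [Algebra K L]
    (q : Ideal (𝓞 K)) (hq0 : q ≠ ⊥) [hq : q.IsPrime] (P : Ideal (𝓞 L)) [hP : P.IsPrime]
    (hPq : P.comap (algebraMap (𝓞 K) (𝓞 L)) = q) (e : ℕ) (R : Ideal (𝓞 L))
    (hR : q.map (algebraMap (𝓞 K) (𝓞 L)) = P ^ e * R) (hPR : ¬ P ∣ R) (he : e ≠ 0) :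
    ¬ P ^ (e * Module.finrank ℚ L) ∣ differentIdeal (𝓞 K) (𝓞 L) := by
  set N := Module.finrank ℚ L with hN
  have hNpos : N ≠ 0 := Module.finrank_pos.ne'
  have hP0 : P ≠ ⊥ := by
    rintro rfl
    apply hq0
    rw [← hPq, Ideal.comap_bot_of_injective _ (FaithfulSMul.algebraMap_injective (𝓞 K) (𝓞 L))]
  have hPm : P.IsMaximal := hP.isMaximal hP0
  have hcop : IsCoprime (P ^ (e * N)) (R ^ N) := by
    apply IsCoprime.pow
    rw [Ideal.isCoprime_iff_sup_eq]
    refine hPm.1.2 _ (lt_of_le_of_ne le_sup_left fun hc => hPR ?_)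
    rw [Ideal.dvd_iff_le, hc]
    exact le_sup_right
  have hmap : P ^ (e * N) * R ^ N = (q ^ N).map (algebraMap (𝓞 K) (𝓞 L)) := by
    rw [Ideal.map_pow, hR, mul_pow, pow_mul]
  obtain ⟨y, hy, x, hx, hxy⟩ := Ideal.isCoprime_iff_exists.1 hcop
  have hy' : 1 - x = y := by rw [← hxy]; ring
  have hM : NumberField (IntermediateField.normalClosure K L (AlgebraicClosure L)) :=
    NumberField.of_module_finite K _
  obtain ⟨r, hr0, hrn, hr⟩ := aux_idem K L (IntermediateField.normalClosure K L (AlgebraicClosure L))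
    (aux_trace K L) q hq0 P hPq N x
    (by rw [← hmap, hy', mul_comm x y]; exact Ideal.mul_mem_mul hy hx)
    (by rw [hy']; exact Ideal.pow_le_self (mul_ne_zero he hNpos) hy)
  refine not_dvd_differentIdeal_of_intTrace_not_mem (p := q ^ N) (𝓞 K) _ _ hmap x hx ?_
  intro h
  have h1 := sub_mem h hr
  rw [sub_sub_cancel] at h1
  refine aux_nat K q _ r hr0 hrn ?_
  rwa [mul_comm, Module.finrank_mul_finrank]

theorem multiplicity_relativeDiscriminant_le
    (K L : Type*) [Field K] [Field L] [NumberField K] [NumberField L] [Algebra K L]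
    (q : Ideal (𝓞 K)) (hq0 : q ≠ ⊥) (hq : q.IsPrime) :
    emultiplicity q (Ideal.spanNorm (𝓞 K) (differentIdeal (𝓞 K) (𝓞 L)))
      ≤ (Module.finrank K L * Module.finrank ℚ L : ℕ) := by
  classical
  rw [Ideal.spanNorm_eq]
  set N := Module.finrank ℚ L with hN
  have hqp : Prime q := Ideal.prime_of_isPrime hq0 hq
  have hqL0 : q.map (algebraMap (𝓞 K) (𝓞 L)) ≠ ⊥ := by
    rw [Ne, Ideal.map_eq_bot_iff_of_injective (FaithfulSMul.algebraMap_injective _ _)]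
    exact hq0
  set D := differentIdeal (𝓞 K) (𝓞 L) with hD
  have hD0 : D ≠ ⊥ := differentIdeal_ne_bot
  set G := D ⊔ (q ^ N).map (algebraMap (𝓞 K) (𝓞 L)) with hG
  obtain ⟨J, hJ⟩ : G ∣ D := Ideal.dvd_iff_le.2 le_sup_left
  have hG2 : G ∣ (q ^ N).map (algebraMap (𝓞 K) (𝓞 L)) := Ideal.dvd_iff_le.2 le_sup_right
  have hJ0 : J ≠ ⊥ := by
    rintro rfl
    apply hD0; rw [hJ]; simp
  have hPJ : ∀ P : Ideal (𝓞 L), P.IsPrime → P.comap (algebraMap (𝓞 K) (𝓞 L)) = q → ¬ P ∣ J := by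
    intro P hP hPq hdvd
    have hP0 : P ≠ ⊥ := by
      rintro rfl
      apply hq0
      rw [← hPq, Ideal.comap_bot_of_injective _ (FaithfulSMul.algebraMap_injective (𝓞 K) (𝓞 L))]
    have hPp : Prime P := Ideal.prime_of_isPrime hP0 hP
    obtain ⟨R, hR, hPR⟩ := (FiniteMultiplicity.of_prime_left hPp hqL0).exists_eq_pow_mul_and_not_dvd
    set e := multiplicity P (q.map (algebraMap (𝓞 K) (𝓞 L))) with he
    have hPqd : P ∣ q.map (algebraMap (𝓞 K) (𝓞 L)) := by
      rw [Ideal.dvd_iff_le, Ideal.map_le_iff_le_comap, hPq]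
    have he0 : e ≠ 0 := by
      intro h0
      rw [h0, pow_zero, one_mul] at hR
      exact hPR (hR ▸ hPqd)
    have hnd := aux_different K L q hq0 P hPq e R hR hPR he0
    obtain ⟨R', hR', hPR'⟩ := (FiniteMultiplicity.of_prime_left hPp hD0).exists_eq_pow_mul_and_not_dvd
    set m := multiplicity P D with hm
    have hmle : m ≤ e * N := by
      by_contra hc
      push Not at hc
      exact hnd ((pow_dvd_pow P hc.le).trans ⟨R', hR'⟩)
    have hmG : P ^ m ∣ G := by
      rw [Ideal.dvd_iff_le]
      refine sup_le (Ideal.dvd_iff_le.1 ⟨R', hR'⟩) (Ideal.dvd_iff_le.1 ?_)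
      rw [Ideal.map_pow, hR, mul_pow, ← pow_mul]
      exact (pow_dvd_pow P hmle).mul_right _
    have h1 : P ^ (m + 1) ∣ D := by
      rw [hJ, pow_succ]; exact mul_dvd_mul hmG hdvd
    rw [hR', pow_succ] at h1
    exact hPR' ((mul_dvd_mul_iff_left (pow_ne_zero _ hP0)).1 h1)
  have hqJ : ∀ J : Ideal (𝓞 L), J ≠ ⊥ → (∀ P : Ideal (𝓞 L), P.IsPrime →
      P.comap (algebraMap (𝓞 K) (𝓞 L)) = q → ¬ P ∣ J) → ¬ q ∣ Ideal.relNorm (𝓞 K) J := by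
    intro J
    induction J using UniqueFactorizationMonoid.induction_on_prime with
    | h₁ => intro h; exact absurd rfl h
    | h₂ u hu =>
      intro _ _ h
      rw [Ideal.isUnit_iff.1 hu, Ideal.relNorm_top] at h
      exact hqp.not_isUnit (isUnit_of_dvd_one (by rwa [Ideal.one_eq_top]))
    | h₃ I P hI hP ih =>
      intro _ h hd
      rw [map_mul] at hd
      rcases hqp.dvd_or_dvd hd with h1 | h1
      · have hPP : P.IsPrime := Ideal.isPrime_of_prime hP
        let p := P.comap (algebraMap (𝓞 K) (𝓞 L))
        have : P.LiesOver p := ⟨rfl⟩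
        have hpp : p.IsPrime := Ideal.IsPrime.comap _
        obtain ⟨s, hs⟩ := Ideal.exists_relNorm_eq_pow_of_isPrime P p
        rw [hs] at h1
        have h2 := hqp.dvd_of_dvd_pow h1
        refine h P hPP ?_ (dvd_mul_right _ _)
        have hp0 : p ≠ ⊥ := Ideal.IsIntegral.comap_ne_bot _ hP.ne_zero
        have hpm : p.IsMaximal := hpp.isMaximal hp0
        exact hpm.eq_of_le hq.ne_top (Ideal.dvd_iff_le.1 h2)
      · exact ih hI (fun P' hP' hc hd' => h P' hP' hc (hd'.mul_left _)) h1
  have hfin := hqJ J hJ0 hPJ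
  rw [hJ, map_mul, emultiplicity_mul hqp, emultiplicity_eq_zero.2 hfin, add_zero]
  have hN1 : Ideal.relNorm (𝓞 K) G ∣ q ^ (Module.finrank K L * N) := by
    have := map_dvd (Ideal.relNorm (𝓞 K)) hG2
    rw [Ideal.relNorm_algebraMap] at this
    rw [mul_comm, pow_mul]
    rwa [← IsFractionRing.finrank_eq (𝓞 K) K (𝓞 L) L] at this
  refine (emultiplicity_le_emultiplicity_of_dvd_right hN1).trans ?_
  rw [emultiplicity_pow_self hqp.ne_zero hqp.not_isUnit]
end

section
/- Let p ≥ 11 be an integer and let d, s be positive integers with d ≤ 2s, and let D, P be real numbers with D ≥ 1 and P ≥ (log 2)^s. Set D* = p^{d²(p-1)³/8}·D^{(p-1)/2} and Δ(p) = ((2p)^{dp(p-1)}·(D*)^{p-1})^{1/2} · (log((2p)^{dp(p-1)}·(D*)^{p-1}))^{d(p-1)²/2} · P^{(p-1)²/2}. Then Δ(p) ≤ e^{7s²p⁴·log p} · ((d²·log(D+1))^d · D · P)^{p²}. -/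
set_option maxHeartbeats 2000000 in
/-- the estimate `Δ(p) ≤ e^{7s²p⁴ log p}·((d²·log(D+1))^d·D·P)^{p²}` from
the proof of the main theorem, where `D* = p^{d²(p-1)³/8}·D^{(p-1)/2}` and
`Δ(p) = ((2p)^{dp(p-1)}·(D*)^{p-1})^{1/2}·(log((2p)^{dp(p-1)}·(D*)^{p-1}))^{d(p-1)²/2}·P^{(p-1)²/2}`. -/
theorem delta_le (p d s : ℕ) (hp : 11 ≤ p) (hd : 0 < d) (hs : 0 < s) (hds : d ≤ 2 * s)
    (D P : ℝ) (hD : 1 ≤ D) (hP : (Real.log 2) ^ s ≤ P)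
    (Dstar Δ : ℝ)
    (hDstar : Dstar =
      (p : ℝ) ^ ((d : ℝ) ^ 2 * ((p : ℝ) - 1) ^ 3 / 8) * D ^ (((p : ℝ) - 1) / 2))
    (hΔ : Δ =
      ((2 * (p : ℝ)) ^ ((d : ℝ) * (p : ℝ) * ((p : ℝ) - 1)) * Dstar ^ ((p : ℝ) - 1)) ^
          ((1 : ℝ) / 2) *
        Real.log ((2 * (p : ℝ)) ^ ((d : ℝ) * (p : ℝ) * ((p : ℝ) - 1)) *
            Dstar ^ ((p : ℝ) - 1)) ^ ((d : ℝ) * ((p : ℝ) - 1) ^ 2 / 2) *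
        P ^ (((p : ℝ) - 1) ^ 2 / 2)) :
    Δ ≤ Real.exp (7 * (s : ℝ) ^ 2 * (p : ℝ) ^ 4 * Real.log p) *
        (((d : ℝ) ^ 2 * Real.log (D + 1)) ^ d * D * P) ^ (p ^ 2) := by
  have hp' : (11:ℝ) ≤ p := by exact_mod_cast hp
  have hd' : (1:ℝ) ≤ d := by exact_mod_cast hd
  have hs' : (1:ℝ) ≤ s := by exact_mod_cast hs
  have hds' : (d:ℝ) ≤ 2 * s := by exact_mod_cast hds
  have hp0 : (0:ℝ) < p := by linarith
  have hd0 : (0:ℝ) < d := by linarith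
  have hD0 : (0:ℝ) < D := by linarith
  have hl2 : (1/2:ℝ) < Real.log 2 := by linarith [Real.log_two_gt_d9]
  have hP0 : 0 < P := lt_of_lt_of_le (pow_pos (by linarith) _) hP
  have hM : (1/2:ℝ) ≤ Real.log (D+1) :=
    hl2.le.trans (Real.log_le_log (by norm_num) (by linarith))
  have hM0 : 0 < Real.log (D+1) := by linarith
  have hl0 : 0 ≤ Real.log D := Real.log_nonneg hD
  have hlM : Real.log D ≤ Real.log (D+1) := Real.log_le_log hD0 (by linarith)
  have hL1 : 1 ≤ Real.log p := by
    rw [Real.le_log_iff_exp_le hp0]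
    linarith [Real.exp_one_lt_d9]
  have hLp : Real.log p ≤ p := (Real.log_le_sub_one_of_pos hp0).trans (by linarith)
  have hlog2p : Real.log (2 * (p:ℝ)) = Real.log 2 + Real.log p :=
    Real.log_mul (by norm_num) hp0.ne'
  have hl2' : Real.log 2 ≤ 1 := by linarith [Real.log_two_lt_d9]
  have hneg : ∀ x : ℝ, 1/2 ≤ x → -1 ≤ Real.log x := by
    intro x hx
    have h1 : Real.log (1/2) ≤ Real.log x := Real.log_le_log (by norm_num) hx
    have h2 : Real.log (1/2) = - Real.log 2 := by
      rw [one_div, Real.log_inv]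
    linarith
  have hlP : -(s:ℝ) ≤ Real.log P := by
    have h1 := Real.log_le_log (pow_pos (by linarith) _) hP
    rw [Real.log_pow] at h1
    have h2 := hneg _ hl2.le
    nlinarith
  have hDs0 : 0 < Dstar := by rw [hDstar]; positivity
  have hlDs : Real.log Dstar = (d : ℝ) ^ 2 * ((p : ℝ) - 1) ^ 3 / 8 * Real.log p
      + ((p : ℝ) - 1) / 2 * Real.log D := by
    rw [hDstar, Real.log_mul (by positivity) (by positivity), Real.log_rpow hp0,
      Real.log_rpow hD0]
  set B := (2 * (p : ℝ)) ^ ((d : ℝ) * (p : ℝ) * ((p : ℝ) - 1)) * Dstar ^ ((p : ℝ) - 1) with hB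
  have hB0 : 0 < B := by positivity
  have hlB : Real.log B = (d : ℝ) * (p : ℝ) * ((p : ℝ) - 1) * (Real.log 2 + Real.log p)
      + ((p : ℝ) - 1) * ((d : ℝ) ^ 2 * ((p : ℝ) - 1) ^ 3 / 8 * Real.log p
      + ((p : ℝ) - 1) / 2 * Real.log D) := by
    rw [hB, Real.log_mul (by positivity) (by positivity), Real.log_rpow (by positivity),
      Real.log_rpow hDs0, hlog2p, hlDs]
  clear_value B
  generalize hA : Real.log B = A at *
  generalize hLL : Real.log p = L at *
  generalize hMM : Real.log (D+1) = M at *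
  generalize hll : Real.log D = l at *
  generalize hlPP : Real.log P = lP at *
  obtain ⟨q, hq⟩ : ∃ q : ℝ, q = (p:ℝ) - 1 := ⟨_, rfl⟩
  rw [← hq] at hΔ hlB
  clear hB hlDs hDstar
  have hq0 : 0 < q := by linarith
  have hqp : q ≤ p := by linarith
  have hL0 : 0 < L := by linarith
  have hA0 : 0 < A := by
    rw [hlB]
    have : 0 < (d:ℝ) * p * q * (Real.log 2 + L) := by positivity
    positivity
  -- three pieces of A
  have hdd : (d:ℝ) ≤ (d:ℝ)^2 := by nlinarith
  have hq4 : q^4 ≤ (p:ℝ)^4 := by gcongr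
  have hq2 : q^2 ≤ (p:ℝ)^2 := by gcongr
  have hpq : (p:ℝ) * q ≤ (p:ℝ)^2 := by rw [sq]; gcongr
  have hAb : A ≤ d * (p:ℝ)^2 * (2*L) + (d:ℝ)^2 * (p:ℝ)^4 / 8 * L + (q^2/2) * l := by
    have e : A = d * ((p:ℝ) * q) * (Real.log 2 + L) + (d:ℝ)^2 * q^4 / 8 * L + (q^2/2) * l := by
      rw [hlB]; ring
    rw [e]
    have : Real.log 2 + L ≤ 2 * L := by linarith
    gcongr
  have hAM : A ≤ (d:ℝ)^2 * M * (p:ℝ)^6 := by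
    have h1 : d * (p:ℝ)^2 * (2*L) ≤ (d:ℝ)^2 * (p:ℝ)^2 * (2*p) * (2 * M) := by
      have : d * (p:ℝ)^2 * (2*L) ≤ (d:ℝ)^2 * (p:ℝ)^2 * (2*p) := by gcongr
      refine this.trans (le_mul_of_one_le_right (by positivity) (by linarith))
    have h2 : (d:ℝ)^2 * (p:ℝ)^4 / 8 * L ≤ (d:ℝ)^2 * (p:ℝ)^4 / 8 * p * (2 * M) := by
      have : (d:ℝ)^2 * (p:ℝ)^4 / 8 * L ≤ (d:ℝ)^2 * (p:ℝ)^4 / 8 * p := by gcongr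
      refine this.trans (le_mul_of_one_le_right (by positivity) (by linarith))
    have h3 : (q^2/2) * l ≤ (d:ℝ)^2 * ((p:ℝ)^2/2) * M := by
      have h4 : (q^2/2) * l ≤ ((p:ℝ)^2/2) * M := by gcongr
      have h5 : ((p:ℝ)^2/2) * M ≤ (d:ℝ)^2 * (((p:ℝ)^2/2) * M) :=
        le_mul_of_one_le_left (by positivity) (by linarith)
      linarith
    have h6 : 4 * (p:ℝ)^3 + (p:ℝ)^5/4 + (p:ℝ)^2/2 ≤ (p:ℝ)^6 := by
      have a1 : (p:ℝ)^2 ≤ (p:ℝ)^5 := pow_le_pow_right₀ (by linarith) (by norm_num)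
      have a2 : (p:ℝ)^3 ≤ (p:ℝ)^5 := pow_le_pow_right₀ (by linarith) (by norm_num)
      have a3 : 11 * (p:ℝ)^5 ≤ (p:ℝ)^6 := by
        rw [pow_succ _ 5, mul_comm]; gcongr
      have a4 : 0 < (p:ℝ)^5 := by positivity
      linarith
    have h7 := mul_le_mul_of_nonneg_left h6 (show 0 ≤ (d:ℝ)^2 * M by positivity)
    nlinarith
  have hlA : Real.log A ≤ Real.log ((d:ℝ)^2 * M) + 6 * L := by
    have h := Real.log_le_log hA0 hAM
    rw [Real.log_mul (by positivity) (by positivity), Real.log_pow (n := 6), hLL] at h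
    exact_mod_cast h
  have hX : -1 ≤ Real.log ((d:ℝ)^2 * M) := hneg _ (by nlinarith)
  -- pass to exponentials
  have hR : (((d : ℝ) ^ 2 * M) ^ d * D * P) ^ (p ^ 2)
      = Real.exp ((p:ℝ)^2 * (d * Real.log ((d:ℝ)^2 * M) + l + lP)) := by
    rw [← Real.exp_log (show 0 < (((d : ℝ) ^ 2 * M) ^ d * D * P) ^ (p ^ 2) by positivity),
      Real.log_pow, Real.log_mul (by positivity) (by positivity),
      Real.log_mul (by positivity) (by positivity), Real.log_pow, hll, hlPP]
    push_cast
    rfl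
  rw [hR, ← Real.exp_add, hΔ, Real.rpow_def_of_pos hB0, Real.rpow_def_of_pos hA0,
    Real.rpow_def_of_pos hP0, hA, hlPP, ← Real.exp_add, ← Real.exp_add]
  apply Real.exp_le_exp.mpr
  generalize Real.log ((d:ℝ)^2 * M) = X at *
  have c1 : Real.log A * (d * q^2/2) ≤ (X + 6 * L) * (d * q^2/2) := by gcongr
  have hw : 0 ≤ (p:ℝ)^2 - q^2/2 := by nlinarith
  have hw' : (p:ℝ)^2 - q^2/2 ≤ (p:ℝ)^2 := by nlinarith
  have hsp : 0 ≤ (s:ℝ) * (p:ℝ)^2 := by positivity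
  have c2 : -(2 * s * (p:ℝ)^2) ≤ ((p:ℝ)^2 - q^2/2) * (d * X) := by
    have h1 : -(d:ℝ) ≤ d * X := by nlinarith
    have h2 := mul_le_mul_of_nonneg_left h1 hw
    have h3 : ((p:ℝ)^2 - q^2/2) * d ≤ (p:ℝ)^2 * (2 * s) := by gcongr
    linarith
  have c3 : -(s * (p:ℝ)^2) ≤ ((p:ℝ)^2 - q^2/2) * lP := by
    have h2 := mul_le_mul_of_nonneg_left hlP hw
    have h3 : ((p:ℝ)^2 - q^2/2) * s ≤ (p:ℝ)^2 * s := by gcongr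
    linarith
  have c4 : 6 * L * (d * q^2/2) ≤ 6 * L * (2 * s * (p:ℝ)^2/2) := by gcongr
  have c5 : d * (p:ℝ)^2 * (2*L) ≤ 2 * s * (p:ℝ)^2 * (2*L) := by gcongr
  have c6 : (d:ℝ)^2 * (p:ℝ)^4 / 8 * L ≤ (2 * s)^2 * (p:ℝ)^4 / 8 * L := by gcongr
  have c7 : q^2/2 * l ≤ (p:ℝ)^2 * l := by
    have : q^2/2 ≤ (p:ℝ)^2 := by linarith
    gcongr
  have c7' : 0 ≤ (p:ℝ)^2 * l := by positivity
  have c8 : (s:ℝ) * (p:ℝ)^2 ≤ s * (p:ℝ)^2 * L := le_mul_of_one_le_right hsp hL1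
  have c9 : 4 * ((s:ℝ) * (p:ℝ)^2 * L) ≤ (s:ℝ)^2 * (p:ℝ)^4 * L := by
    have h1 : (s:ℝ) ≤ (s:ℝ)^2 := by nlinarith
    have h2 : 4 * (p:ℝ)^2 ≤ (p:ℝ)^4 := by
      have h0 : 4 ≤ (p:ℝ)^2 := by nlinarith
      have h5 := mul_le_mul_of_nonneg_right h0 (sq_nonneg (p:ℝ))
      calc 4 * (p:ℝ)^2 ≤ (p:ℝ)^2 * (p:ℝ)^2 := h5
        _ = (p:ℝ)^4 := by ring
    have h3 : (s:ℝ) * (4 * (p:ℝ)^2) * L ≤ (s:ℝ)^2 * (p:ℝ)^4 * L := by gcongr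
    linarith
  have c10 : 0 ≤ (s:ℝ)^2 * (p:ℝ)^4 * L := by positivity
  linarith
end
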